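/- arXiv:2502.04572 — 3 statements merged into one kernel-verified Lean document; each statement's English description precedes it below -/
import Mathlib

section
/- Let d ≥ 1, 0 < α < d/2, and s > 0. Then for every x ∈ ℝ^d, ∫_{ℝ^d} e^{-‖z-x‖²/(2s)}·‖z‖^{2α-d} dz ≤ ∫_{ℝ^d} e^{-‖z‖²/(2s)}·‖z‖^{2α-d} dz; that is, the convolution of the centered Gaussian density with the Riesz-type kernel ‖·‖^{2α-d} attains its maximum at the origin. -/
open MeasureTheory
open scoped ENNReal

/-!
The two integrands `f` and `g` are decreasing functions of the norm, so away from the origin they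
are ordered in the same way. The reflection `z ↦ x - z` is a measure-preserving involution, and
`f (z - x) = f (x - z)`. For any measure-preserving involution `T`, integrating the two-point
rearrangement inequality `f (T z) g z + f z g (T z) ≤ f z g z + f (T z) g (T z)` gives
`2 ∫ f (T z) g z ≤ 2 ∫ f z g z`, because `T` exchanges the two terms on each side. No subtraction
occurs, so everything can be done in `ℝ≥0∞`, without integrability considerations.
-/

theorem mul_add_mul_le_mul_add_mul_of_monovaryOn {ι R : Type*} [NonUnitalNonAssocSemiring R]
    [LinearOrder R] [CanonicallyOrderedAdd R] {f g : ι → R} {S : Set ι}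
    (hfg : MonovaryOn f g S) {i j : ι} (hi : i ∈ S) (hj : j ∈ S) :
    f i * g j + f j * g i ≤ f i * g i + f j * g j := by
  wlog hg : g i ≤ g j generalizing i j
  · simpa only [add_comm] using this hj hi (le_of_not_ge hg)
  obtain hg_eq | hg_lt := hg.eq_or_lt
  · rw [hg_eq]
  obtain ⟨c, hc⟩ := exists_add_of_le hg
  calc f i * g j + f j * g i = f i * g i + f j * g i + f i * c := by rw [hc, mul_add]; abel
    _ ≤ f i * g i + f j * g i + f j * c := by gcongr; exact hfg hi hj hg_lt
    _ = f i * g i + f j * g j := by rw [hc, mul_add]; abel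

theorem lintegral_comp_involutive_mul_le {X : Type*} [MeasurableSpace X] {μ : Measure X}
    {T : X → X} (hT : MeasurePreserving T μ μ) (hT_inv : Function.Involutive T) {f g : X → ℝ≥0∞}
    (hfg_meas : AEMeasurable (fun z => f z * g z) μ) {S : Set X} (hS : ∀ᵐ z ∂μ, z ∈ S)
    (hfg : MonovaryOn f g S) :
    ∫⁻ z, f (T z) * g z ∂μ ≤ ∫⁻ z, f z * g z ∂μ := by
  have lintegral_comp_T (h : X → ℝ≥0∞) : ∫⁻ z, h (T z) ∂μ = ∫⁻ z, h z ∂μ :=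
    hT.lintegral_comp_emb
      (MeasurableEquiv.ofInvolutive T hT_inv hT.measurable).measurableEmbedding h
  have cross : ∫⁻ z, f z * g (T z) ∂μ = ∫⁻ z, f (T z) * g z ∂μ := by
    simpa only [hT_inv _] using lintegral_comp_T fun z => f (T z) * g z
  have two_mul_le : 2 * ∫⁻ z, f (T z) * g z ∂μ ≤ 2 * ∫⁻ z, f z * g z ∂μ :=
    calc 2 * ∫⁻ z, f (T z) * g z ∂μ
        = ∫⁻ z, f z * g (T z) ∂μ + ∫⁻ z, f (T z) * g z ∂μ := by rw [cross, two_mul]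
      _ ≤ ∫⁻ z, (f z * g (T z) + f (T z) * g z) ∂μ := le_lintegral_add _ _
      _ ≤ ∫⁻ z, (f z * g z + f (T z) * g (T z)) ∂μ := by
        refine lintegral_mono_ae ?_
        filter_upwards [hS, hT.quasiMeasurePreserving.ae hS] with z hz hTz
        exact mul_add_mul_le_mul_add_mul_of_monovaryOn hfg hz hTz
      _ = 2 * ∫⁻ z, f z * g z ∂μ := by
        rw [lintegral_add_left' hfg_meas, lintegral_comp_T fun z => f z * g z, two_mul]
  exact (ENNReal.mul_le_mul_iff_right two_ne_zero ENNReal.ofNat_ne_top).1 two_mul_le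

section NormedGroup

variable {E : Type*} [NormedAddCommGroup E] [MeasurableSpace E] [BorelSpace E] (μ : Measure E)
  [μ.IsAddLeftInvariant] [μ.IsNegInvariant] [NullSingletonClass μ]

theorem lintegral_norm_sub_mul_norm_le_of_antitoneOn {φ ψ : ℝ → ℝ≥0∞}
    (hφψ_meas : Measurable fun r => φ r * ψ r) (hφ : AntitoneOn φ (Set.Ioi 0))
    (hψ : AntitoneOn ψ (Set.Ioi 0)) (x : E) :
    ∫⁻ z, φ ‖z - x‖ * ψ ‖z‖ ∂μ ≤ ∫⁻ z, φ ‖z‖ * ψ ‖z‖ ∂μ := by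
  have norm_pos_ae : ∀ᵐ z ∂μ, z ∈ norm ⁻¹' Set.Ioi (0 : ℝ) := by
    filter_upwards [μ.ae_ne 0] with z hz using norm_pos_iff.2 hz
  simp_rw [norm_sub_rev _ x]
  exact lintegral_comp_involutive_mul_le (Measure.measurePreserving_sub_left μ x) (sub_sub_cancel x)
    (hφψ_meas.comp measurable_norm).aemeasurable norm_pos_ae
    ((hφ.monovaryOn hψ).comp_right norm)

-- As `0 ^ p = 0` for `p < 0`, the kernel decreases with the norm only off the origin, a null set.
theorem gauss_riesz_convolution_max_at_origin_general {s p : ℝ} (hs : 0 < s) (hp : p ≤ 0)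
    (x : E) :
    ∫⁻ z, ENNReal.ofReal (Real.exp (-‖z - x‖ ^ 2 / (2 * s)) * ‖z‖ ^ p) ∂μ
      ≤ ∫⁻ z, ENNReal.ofReal (Real.exp (-‖z‖ ^ 2 / (2 * s)) * ‖z‖ ^ p) ∂μ := by
  have gauss_antitoneOn :
      AntitoneOn (fun r => ENNReal.ofReal (Real.exp (-r ^ 2 / (2 * s)))) (Set.Ioi 0) := by
    intro a (ha : 0 < a) b _ hab
    dsimp only
    gcongr
  have riesz_antitoneOn : AntitoneOn (fun r : ℝ => ENNReal.ofReal (r ^ p)) (Set.Ioi 0) :=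
    ENNReal.ofReal_mono.comp_antitoneOn (Real.antitoneOn_rpow_Ioi_of_exponent_nonpos hp)
  simp_rw [ENNReal.ofReal_mul (Real.exp_nonneg _)]
  exact lintegral_norm_sub_mul_norm_le_of_antitoneOn μ (by fun_prop) gauss_antitoneOn
    riesz_antitoneOn x

end NormedGroup

/-- For `0 < α < d/2` and `s > 0`, the convolution of the centered Gaussian density with the
Riesz-type kernel `‖·‖^{2α-d}` attains its maximum at the origin:
`∫ e^{-‖z-x‖²/(2s)} ‖z‖^{2α-d} dz ≤ ∫ e^{-‖z‖²/(2s)} ‖z‖^{2α-d} dz`. -/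
theorem gauss_riesz_convolution_max_at_origin (d : ℕ) (hd : 1 ≤ d) (α : ℝ)
    (hα0 : 0 < α) (hαd : α < d / 2) (s : ℝ) (hs : 0 < s)
    (x : EuclideanSpace ℝ (Fin d)) :
    (∫⁻ z : EuclideanSpace ℝ (Fin d),
        ENNReal.ofReal (Real.exp (-‖z - x‖ ^ 2 / (2 * s)) * ‖z‖ ^ (2 * α - (d : ℝ))))
      ≤ ∫⁻ z : EuclideanSpace ℝ (Fin d),
          ENNReal.ofReal (Real.exp (-‖z‖ ^ 2 / (2 * s)) * ‖z‖ ^ (2 * α - (d : ℝ))) := by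
  have : Nonempty (Fin d) := ⟨⟨0, hd⟩⟩
  exact gauss_riesz_convolution_max_at_origin_general volume hs (by linarith) x
end

section
/- Let d ≥ 1, 0 < α < d/2, and s > 0. Then for all x, x′ ∈ ℝ^d, ∬_{ℝ^d×ℝ^d} e^{-‖z-x‖²/(2s)}·e^{-‖z′-x′‖²/(2s)}·‖z-z′‖^{2α-d} dz dz′ ≤ ∬_{ℝ^d×ℝ^d} e^{-‖z‖²/(2s)}·e^{-‖z′‖²/(2s)}·‖z-z′‖^{2α-d} dz dz′; that is, the supremum over x, x′ of the double Gaussian–Riesz integral is achieved at x = x′. -/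
open MeasureTheory
open scoped ENNReal

/-!
Substituting `w = z - z'`, the product of the two Gaussians integrates in `z` to a constant times
one wider Gaussian centered at `x - x'`, so the double integral is a constant times
`∫ exp (-‖w - (x - x')‖² / (4s)) ‖w‖ ^ (2α - d) dw`. The Gaussian and the Riesz kernel both decrease
in `‖w‖`, so their superlevel sets are nested, and shifting one member `A` of a nested pair can only
decrease the overlap: `μ (T⁻¹ A ∩ B) ≤ min (μ A) (μ B) = μ (A ∩ B)`. By the layer cake formula the
integral is largest without a shift.
-/

open Set

section Rearrangement

variable {X : Type*} [MeasurableSpace X] {μ : Measure X} {T : X → X} {f g : X → ℝ} {S : Set X}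

lemma measure_preimage_inter_le {A B : Set X} (hT : MeasurePreserving T μ μ)
    (hA : NullMeasurableSet A μ) (hAB : A ≤ᵐ[μ] B ∨ B ≤ᵐ[μ] A) :
    μ (T ⁻¹' A ∩ B) ≤ μ (A ∩ B) := by
  rcases hAB with h | h
  · calc
      μ (T ⁻¹' A ∩ B) ≤ μ (T ⁻¹' A) := measure_mono inter_subset_left
      _ = μ A := hT.measure_preimage hA
      _ ≤ μ (A ∩ B) := measure_mono_ae <| h.mono fun _ hx hxA => ⟨hxA, hx hxA⟩
  · calc
      μ (T ⁻¹' A ∩ B) ≤ μ B := measure_mono inter_subset_right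
      _ ≤ μ (A ∩ B) := measure_mono_ae <| h.mono fun _ hx hxB => ⟨hx hxB, hxB⟩

lemma superlevel_ae_le_or_ae_le_of_monovaryOn (hS : S ∈ ae μ) (hfg : MonovaryOn f g S) (t u : ℝ) :
    {a | t < f a} ≤ᵐ[μ] {a | u < g a} ∨ {a | u < g a} ≤ᵐ[μ] {a | t < f a} := by
  by_cases h : ∀ a ∈ S, t < f a → u < g a
  · exact .inl <| Filter.mem_of_superset hS h
  · push Not at h
    obtain ⟨a, haS, hfa, hga⟩ := h
    exact .inr <| Filter.mem_of_superset hS fun b hbS hgb =>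
      hfa.trans_le <| hfg haS hbS <| hga.trans_lt hgb

lemma setLIntegral_preimage_superlevel_le (hT : MeasurePreserving T μ μ) (hf : Measurable f)
    (hg : Measurable g) (hg0 : 0 ≤ g) (hS : S ∈ ae μ) (hfg : MonovaryOn f g S) (t : ℝ) :
    ∫⁻ a in T ⁻¹' {a | t < f a}, ENNReal.ofReal (g a) ∂μ
      ≤ ∫⁻ a in {a | t < f a}, ENNReal.ofReal (g a) ∂μ := by
  have hA : MeasurableSet {a | t < f a} := measurableSet_lt measurable_const hf
  rw [lintegral_eq_lintegral_meas_lt _ (.of_forall hg0) hg.aemeasurable,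
    lintegral_eq_lintegral_meas_lt _ (.of_forall hg0) hg.aemeasurable]
  refine lintegral_mono fun u => ?_
  rw [Measure.restrict_apply' (hT.measurable hA), Measure.restrict_apply' hA, inter_comm,
    inter_comm _ {a | t < f a}]
  exact measure_preimage_inter_le hT hA.nullMeasurableSet
    (superlevel_ae_le_or_ae_le_of_monovaryOn hS hfg t u)

/-- The measure-theoretic analogue of `MonovaryOn.sum_comp_perm_mul_le_sum_mul`. -/
theorem lintegral_comp_mul_le_of_monovaryOn (hT : MeasurePreserving T μ μ)
    (hf : Measurable f) (hf0 : 0 ≤ f) (hg : Measurable g) (hg0 : 0 ≤ g)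
    (hS : S ∈ ae μ) (hfg : MonovaryOn f g S) :
    ∫⁻ a, ENNReal.ofReal (f (T a) * g a) ∂μ ≤ ∫⁻ a, ENNReal.ofReal (f a * g a) ∂μ := by
  set ν := μ.withDensity fun a => ENNReal.ofReal (g a)
  have layer_cake {h : X → ℝ} (hh : Measurable h) (hh0 : 0 ≤ h) :
      ∫⁻ a, ENNReal.ofReal (h a * g a) ∂μ
        = ∫⁻ t in Ioi 0, ∫⁻ a in {a | t < h a}, ENNReal.ofReal (g a) ∂μ := calc
    _ = ∫⁻ a, ENNReal.ofReal (h a) ∂ν := by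
      rw [lintegral_withDensity_eq_lintegral_mul _ hg.ennreal_ofReal hh.ennreal_ofReal]
      simp only [mul_comm (h _), ENNReal.ofReal_mul (hg0 _), Pi.mul_apply]
    _ = ∫⁻ t in Ioi 0, ν {a | t < h a} :=
      lintegral_eq_lintegral_meas_lt _ (.of_forall hh0) hh.aemeasurable
    _ = _ := by simp only [ν, withDensity_apply _ (measurableSet_lt measurable_const hh)]
  calc
    _ = ∫⁻ t in Ioi 0, ∫⁻ a in T ⁻¹' {a | t < f a}, ENNReal.ofReal (g a) ∂μ :=
      layer_cake (hf.comp hT.measurable) fun a => hf0 (T a)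
    _ ≤ ∫⁻ t in Ioi 0, ∫⁻ a in {a | t < f a}, ENNReal.ofReal (g a) ∂μ :=
      lintegral_mono fun t => setLIntegral_preimage_superlevel_le hT hf hg hg0 hS hfg t
    _ = _ := (layer_cake hf hf0).symm

end Rearrangement

section Gaussian

/-- The Gaussian density at time `s`, centered at the origin, without its normalizing constant. -/
noncomputable def gaussianWeight {E : Type*} [NormedAddCommGroup E] (s : ℝ) (z : E) : ℝ :=
  Real.exp (-‖z‖ ^ 2 / (2 * s))

variable {E : Type*} [NormedAddCommGroup E] {s t : ℝ}

lemma gaussianWeight_nonneg (s : ℝ) (z : E) : 0 ≤ gaussianWeight s z :=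
  Real.exp_nonneg _

lemma gaussianWeight_le_gaussianWeight (hs : 0 ≤ s) {z w : E} (hzw : ‖z‖ ≤ ‖w‖) :
    gaussianWeight s w ≤ gaussianWeight s z := by
  unfold gaussianWeight
  gcongr

lemma gaussianWeight_neg (s : ℝ) (z : E) : gaussianWeight s (-z) = gaussianWeight s z := by
  simp only [gaussianWeight, norm_neg]

@[fun_prop]
lemma measurable_gaussianWeight [MeasurableSpace E] [OpensMeasurableSpace E] (s : ℝ) :
    Measurable (gaussianWeight s : E → ℝ) := by
  unfold gaussianWeight
  fun_prop

theorem lintegral_gaussianWeight_sub_mul_le [MeasurableSpace E] [BorelSpace E] (μ : Measure E)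
    [μ.IsAddRightInvariant] [NullSingletonClass μ] (hs : 0 ≤ s) {k : E → ℝ} (hk : Measurable k)
    (hk0 : 0 ≤ k) (hk_anti : AntivaryOn k norm {0}ᶜ) (x : E) :
    ∫⁻ w, ENNReal.ofReal (gaussianWeight s (w - x) * k w) ∂μ
      ≤ ∫⁻ w, ENNReal.ofReal (gaussianWeight s w * k w) ∂μ := by
  have hmono : MonovaryOn (gaussianWeight s) k {0}ᶜ := fun v hv w hw hvw =>
    gaussianWeight_le_gaussianWeight hs <| le_of_not_gt fun h => (hk_anti hv hw h).not_gt hvw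
  exact lintegral_comp_mul_le_of_monovaryOn (measurePreserving_sub_right μ x)
    (measurable_gaussianWeight s) (gaussianWeight_nonneg s) hk hk0 (Measure.ae_ne μ 0) hmono

variable [InnerProductSpace ℝ E]

lemma norm_sq_div_add_norm_sq_div (hs : s ≠ 0) (ht : t ≠ 0) (hst : s + t ≠ 0) (p q : E) :
    ‖p‖ ^ 2 / s + ‖q‖ ^ 2 / t
      = ‖(t / (s + t)) • p + (s / (s + t)) • q‖ ^ 2 / (s * t / (s + t))
        + ‖p - q‖ ^ 2 / (s + t) := by
  rw [norm_add_sq_real, norm_sub_sq_real, norm_smul, norm_smul, real_inner_smul_left,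
    real_inner_smul_right, mul_pow, mul_pow, Real.norm_eq_abs, Real.norm_eq_abs, sq_abs, sq_abs]
  field_simp
  ring

lemma gaussianWeight_mul_gaussianWeight (hs : s ≠ 0) (ht : t ≠ 0) (hst : s + t ≠ 0) (p q : E) :
    gaussianWeight s p * gaussianWeight t q
      = gaussianWeight (s * t / (s + t)) ((t / (s + t)) • p + (s / (s + t)) • q)
        * gaussianWeight (s + t) (p - q) := by
  have exponent_eq (r : ℝ) (z : E) : -‖z‖ ^ 2 / (2 * r) = -(1 / 2) * (‖z‖ ^ 2 / r) := by ring
  simp only [gaussianWeight, ← Real.exp_add, exponent_eq, ← mul_add]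
  rw [norm_sq_div_add_norm_sq_div hs ht hst]

lemma gaussianWeight_sub_mul_gaussianWeight_sub (hs : s ≠ 0) (ht : t ≠ 0) (hst : s + t ≠ 0)
    (x y z : E) :
    gaussianWeight s (z - x) * gaussianWeight t (z - y)
      = gaussianWeight (s * t / (s + t)) (z - ((t / (s + t)) • x + (s / (s + t)) • y))
        * gaussianWeight (s + t) (x - y) := by
  have hmean : (t / (s + t)) • (z - x) + (s / (s + t)) • (z - y)
      = z - ((t / (s + t)) • x + (s / (s + t)) • y) := by
    match_scalars <;> field_simp
    ring
  rw [gaussianWeight_mul_gaussianWeight hs ht hst, hmean, sub_sub_sub_cancel_left,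
    ← gaussianWeight_neg _ (x - y), neg_sub]

variable [MeasurableSpace E] [BorelSpace E] (μ : Measure E)

lemma lintegral_gaussianWeight_sub_mul_gaussianWeight_sub [μ.IsAddRightInvariant] (hs : s ≠ 0)
    (ht : t ≠ 0) (hst : s + t ≠ 0) (x y : E) :
    ∫⁻ z, ENNReal.ofReal (gaussianWeight s (z - x) * gaussianWeight t (z - y)) ∂μ
      = (∫⁻ z, ENNReal.ofReal (gaussianWeight (s * t / (s + t)) z) ∂μ)
        * ENNReal.ofReal (gaussianWeight (s + t) (x - y)) := by
  simp only [gaussianWeight_sub_mul_gaussianWeight_sub hs ht hst,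
    ENNReal.ofReal_mul (gaussianWeight_nonneg _ _)]
  rw [lintegral_mul_const _ (by fun_prop),
    lintegral_sub_right_eq_self fun z => ENNReal.ofReal (gaussianWeight (s * t / (s + t)) z)]

variable [FiniteDimensional ℝ E] [μ.IsAddHaarMeasure] {k : E → ℝ}

lemma lintegral_lintegral_gaussianWeight_mul_kernel (hs : s ≠ 0) (ht : t ≠ 0) (hst : s + t ≠ 0)
    (hk : Measurable k) (x x' : E) :
    ∫⁻ z, ∫⁻ z', ENNReal.ofReal
        (gaussianWeight s (z - x) * gaussianWeight t (z' - x') * k (z - z')) ∂μ ∂μ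
      = (∫⁻ z, ENNReal.ofReal (gaussianWeight (s * t / (s + t)) z) ∂μ)
        * ∫⁻ w, ENNReal.ofReal (gaussianWeight (s + t) (w - (x - x')) * k w) ∂μ := calc
  _ = ∫⁻ z, ∫⁻ w, ENNReal.ofReal
        (gaussianWeight s (z - x) * gaussianWeight t (z - (w + x')) * k w) ∂μ ∂μ := by
    refine lintegral_congr fun z => ?_
    rw [← lintegral_sub_left_eq_self _ z]
    simp only [sub_sub_cancel, sub_sub]
  _ = ∫⁻ w, ∫⁻ z, ENNReal.ofReal
        (gaussianWeight s (z - x) * gaussianWeight t (z - (w + x')) * k w) ∂μ ∂μ :=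
    lintegral_lintegral_swap (by fun_prop)
  _ = ∫⁻ w, (∫⁻ z, ENNReal.ofReal (gaussianWeight (s * t / (s + t)) z) ∂μ)
        * ENNReal.ofReal (gaussianWeight (s + t) (w - (x - x')) * k w) ∂μ := by
    refine lintegral_congr fun w => ?_
    have hcenter : x - (w + x') = -(w - (x - x')) := by abel
    simp only [ENNReal.ofReal_mul (mul_nonneg (gaussianWeight_nonneg _ _)
      (gaussianWeight_nonneg _ _)), ENNReal.ofReal_mul (gaussianWeight_nonneg _ (w - _))]
    rw [lintegral_mul_const _ (by fun_prop),
      lintegral_gaussianWeight_sub_mul_gaussianWeight_sub μ hs ht hst, hcenter, gaussianWeight_neg,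
      mul_assoc]
  _ = _ := lintegral_const_mul _ (by fun_prop)

/-- The kernel is unconstrained at the origin, where a singular kernel such as
`‖w‖ ^ (2 * α - d)` takes a junk value. -/
theorem double_gauss_riesz_max_at_equal_centers_general [Nontrivial E] (hs : 0 < s) (ht : 0 < t)
    (hk : Measurable k) (hk0 : 0 ≤ k) (hk_anti : AntivaryOn k norm {0}ᶜ) (x x' : E) :
    ∫⁻ z, ∫⁻ z', ENNReal.ofReal
        (gaussianWeight s (z - x) * gaussianWeight t (z' - x') * k (z - z')) ∂μ ∂μ
      ≤ ∫⁻ z, ∫⁻ z', ENNReal.ofReal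
        (gaussianWeight s z * gaussianWeight t z' * k (z - z')) ∂μ ∂μ := by
  have hst : 0 < s + t := add_pos hs ht
  have hcentered := lintegral_lintegral_gaussianWeight_mul_kernel μ hs.ne' ht.ne' hst.ne' hk 0 0
  simp only [sub_zero] at hcentered
  rw [lintegral_lintegral_gaussianWeight_mul_kernel μ hs.ne' ht.ne' hst.ne' hk, hcentered]
  exact mul_le_mul_right (lintegral_gaussianWeight_sub_mul_le μ hst.le hk hk0 hk_anti _) _

end Gaussian

lemma antivaryOn_norm_rpow_norm {E : Type*} [NormedAddCommGroup E] {p : ℝ} (hp : p ≤ 0) :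
    AntivaryOn (fun w : E => ‖w‖ ^ p) norm {0}ᶜ := fun _ hv _ _ hvw =>
  Real.rpow_le_rpow_of_nonpos (norm_pos_iff.2 hv) hvw.le hp

/-- For `0 < α < d/2` and `s > 0`, the double Gaussian–Riesz integral is maximized when the
two Gaussians share the same center:
`∬ e^{-‖z-x‖²/(2s)} e^{-‖z'-x'‖²/(2s)} ‖z-z'‖^{2α-d} ≤ ∬ e^{-‖z‖²/(2s)} e^{-‖z'‖²/(2s)} ‖z-z'‖^{2α-d}`. -/
theorem double_gauss_riesz_max_at_equal_centers (d : ℕ) (hd : 1 ≤ d) (α : ℝ)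
    (hα0 : 0 < α) (hαd : α < d / 2) (s : ℝ) (hs : 0 < s)
    (x x' : EuclideanSpace ℝ (Fin d)) :
    (∫⁻ z : EuclideanSpace ℝ (Fin d), ∫⁻ z' : EuclideanSpace ℝ (Fin d),
        ENNReal.ofReal (Real.exp (-‖z - x‖ ^ 2 / (2 * s))
          * Real.exp (-‖z' - x'‖ ^ 2 / (2 * s)) * ‖z - z'‖ ^ (2 * α - (d : ℝ))))
      ≤ ∫⁻ z : EuclideanSpace ℝ (Fin d), ∫⁻ z' : EuclideanSpace ℝ (Fin d),
          ENNReal.ofReal (Real.exp (-‖z‖ ^ 2 / (2 * s))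
            * Real.exp (-‖z'‖ ^ 2 / (2 * s)) * ‖z - z'‖ ^ (2 * α - (d : ℝ))) := by
  have : Nonempty (Fin d) := ⟨⟨0, hd⟩⟩
  exact double_gauss_riesz_max_at_equal_centers_general volume hs hs (by fun_prop)
    (fun _ => by positivity) (antivaryOn_norm_rpow_norm (by linarith)) x x'
end

section
/- Let d ≥ 1 and let α satisfy 0 < α < d/2 and α > (d-2)/2. Then there exists a constant C > 0 (depending only on α and d) such that for every s > 0 and all x, x′ ∈ ℝ^d, ∬_{ℝ^d×ℝ^d} (2πs)^{-d}·e^{-‖z-x‖²/(2s)}·e^{-‖z′-x′‖²/(2s)}·‖z-z′‖^{2α-d} dz dz′ ≤ C·s^{(2α-d)/2}. In particular the double integral is finite, and since (2α-d)/2 > -1, the function s ↦ C·s^{(2α-d)/2} is integrable over any bounded time interval (0,t). -/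
open MeasureTheory
open scoped ENNReal

/-!
Write `n` for the dimension. Against a function bounded by `M`, the kernel `‖z - y‖ ^ β` with
`-n < β ≤ 0` splits at `‖z - y‖ = R`: inside, it contributes at most `M` times its integral over
the ball, which scales like `R ^ (n + β)`; outside, it is at most `R ^ β`. The heat kernel at
time `s` is bounded by `(2πs) ^ (-n / 2)` and has mass `1`, so with `R = √s` both contributions
are of order `s ^ (β / 2)`, uniformly in `z`, and averaging over `z` preserves the bound.
-/

open Metric Module Real

section RieszKernel

variable {E : Type*} [NormedAddCommGroup E] [MeasurableSpace E] [BorelSpace E] {β R : ℝ}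

lemma lintegral_mul_norm_sub_rpow_le (μ : Measure E) [μ.IsAddLeftInvariant] [μ.IsNegInvariant]
    (hβ : β ≤ 0) (hR : 0 < R) {f : E → ℝ≥0∞} {M : ℝ≥0∞} (hf : ∀ y, f y ≤ M) (z : E) :
    ∫⁻ y, f y * ENNReal.ofReal (‖z - y‖ ^ β) ∂μ ≤
      M * ∫⁻ w in ball 0 R, ENNReal.ofReal (‖w‖ ^ β) ∂μ +
        ENNReal.ofReal (R ^ β) * ∫⁻ y, f y ∂μ := by
  set near : E → ℝ≥0∞ := (ball 0 R).indicator fun w ↦ ENNReal.ofReal (‖w‖ ^ β) with near_def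
  have near_meas : Measurable near := Measurable.indicator (by fun_prop) measurableSet_ball
  have split_le (y : E) : f y * ENNReal.ofReal (‖z - y‖ ^ β) ≤
      M * near (z - y) + ENNReal.ofReal (R ^ β) * f y := by
    by_cases hy : z - y ∈ ball 0 R
    · rw [near_def, Set.indicator_of_mem hy]
      exact le_add_right (by gcongr; exact hf y)
    · have far : R ≤ ‖z - y‖ := by simpa using hy
      rw [mul_comm (f y)]
      exact le_add_left (by gcongr ENNReal.ofReal ?_ * _; exact rpow_le_rpow_of_nonpos hR far hβ)
  calc ∫⁻ y, f y * ENNReal.ofReal (‖z - y‖ ^ β) ∂μ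
      ≤ ∫⁻ y, (M * near (z - y) + ENNReal.ofReal (R ^ β) * f y) ∂μ := lintegral_mono split_le
    _ = M * ∫⁻ y, near (z - y) ∂μ + ENNReal.ofReal (R ^ β) * ∫⁻ y, f y ∂μ := by
      rw [lintegral_add_left (by fun_prop), lintegral_const_mul _ (by fun_prop),
        lintegral_const_mul' _ _ ENNReal.ofReal_ne_top]
    _ = _ := by
      rw [lintegral_sub_left_eq_self near z, near_def, lintegral_indicator measurableSet_ball]

variable [NormedSpace ℝ E] [FiniteDimensional ℝ E] (μ : Measure E) [μ.IsAddHaarMeasure]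

lemma setIntegral_ball_norm_rpow (β : ℝ) (hR : 0 < R) :
    ∫ w in ball (0 : E) R, ‖w‖ ^ β ∂μ =
      R ^ (finrank ℝ E + β) * ∫ w in ball (0 : E) 1, ‖w‖ ^ β ∂μ := by
  have scaling := Measure.setIntegral_comp_smul_of_pos μ (fun w : E ↦ ‖w‖ ^ β) (ball 0 1) hR
  simp only [norm_smul, norm_of_nonneg hR.le, mul_rpow hR.le (norm_nonneg _),
    integral_const_mul, smul_unitBall_of_pos hR, smul_eq_mul] at scaling
  rw [rpow_add hR, rpow_natCast, mul_assoc, scaling, mul_inv_cancel_left₀ (by positivity)]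

lemma setLIntegral_ball_norm_rpow [Nontrivial E] (hβ : -finrank ℝ E < β) (hR : 0 < R) :
    ∫⁻ w in ball (0 : E) R, ENNReal.ofReal (‖w‖ ^ β) ∂μ =
      ENNReal.ofReal (R ^ (finrank ℝ E + β) * ∫ w in ball (0 : E) 1, ‖w‖ ^ β ∂μ) := by
  have integrable : IntegrableOn (fun w : E ↦ ‖w‖ ^ β) (ball 0 R) μ :=
    integrableOn_ball_of_norm_le_rpow (C := 1) (α := -β) finrank_pos (by linarith)
      (ae_of_all _ fun w ↦ by simp [abs_of_nonneg (rpow_nonneg (norm_nonneg w) β)])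
      (Measurable.aestronglyMeasurable (by fun_prop))
  rw [← setIntegral_ball_norm_rpow μ β hR,
    ofReal_integral_eq_lintegral_ofReal integrable (ae_of_all _ fun w ↦ by positivity)]

end RieszKernel

section HeatKernel

variable {E : Type*} [NormedAddCommGroup E] [InnerProductSpace ℝ E] {β s : ℝ}

/-- The heat kernel of `∂ₜ - Δ/2` at time `s`: the density of the centered Gaussian on `E` with
covariance `s • id`. It is meaningful for `0 < s` only. -/
noncomputable def heatKernel (s : ℝ) (z : E) : ℝ :=
  (2 * π * s) ^ (-(finrank ℝ E / 2 : ℝ)) * exp (-‖z‖ ^ 2 / (2 * s))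

lemma heatKernel_nonneg (hs : 0 ≤ s) (z : E) : 0 ≤ heatKernel s z := by
  unfold heatKernel; positivity

lemma heatKernel_le (hs : 0 ≤ s) (z : E) :
    heatKernel s z ≤ (2 * π * s) ^ (-(finrank ℝ E / 2 : ℝ)) := by
  refine mul_le_of_le_one_right (by positivity) (exp_le_one_iff.2 ?_)
  exact div_nonpos_of_nonpos_of_nonneg (by simp) (by positivity)

lemma heatKernel_mul_heatKernel (hs : 0 < s) (u v : E) :
    heatKernel s u * heatKernel s v = (2 * π * s) ^ (-(finrank ℝ E : ℝ)) *
      exp (-‖u‖ ^ 2 / (2 * s)) * exp (-‖v‖ ^ 2 / (2 * s)) := by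
  have normalization : (2 * π * s) ^ (-(finrank ℝ E : ℝ)) =
      (2 * π * s) ^ (-(finrank ℝ E / 2 : ℝ)) * (2 * π * s) ^ (-(finrank ℝ E / 2 : ℝ)) := by
    rw [← rpow_add (by positivity), ← neg_add, add_halves]
  rw [heatKernel, heatKernel, normalization]
  ring

variable [FiniteDimensional ℝ E] [MeasurableSpace E] [BorelSpace E]

lemma integral_heatKernel (hs : 0 < s) : ∫ z : E, heatKernel s z = 1 := by
  have gaussian := GaussianFourier.integral_rexp_neg_mul_sq_norm (V := E)
    (b := (2 * s)⁻¹) (by positivity)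
  simp only [div_inv_eq_mul, neg_mul, inv_mul_eq_div, ← neg_div] at gaussian
  simp only [heatKernel, integral_const_mul, gaussian]
  rw [show π * (2 * s) = 2 * π * s by ring, ← rpow_add (by positivity), neg_add_cancel, rpow_zero]

lemma lintegral_heatKernel_sub (hs : 0 < s) (x : E) :
    ∫⁻ z, ENNReal.ofReal (heatKernel s (z - x)) = 1 := by
  have integrable : Integrable (heatKernel s : E → ℝ) :=
    .of_integral_ne_zero (by simp [integral_heatKernel hs])
  rw [lintegral_sub_right_eq_self (fun z ↦ ENNReal.ofReal (heatKernel s z)) x,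
    ← ofReal_integral_eq_lintegral_ofReal integrable (ae_of_all _ (heatKernel_nonneg hs.le)),
    integral_heatKernel hs, ENNReal.ofReal_one]

lemma exists_lintegral_heatKernel_mul_norm_rpow_le [Nontrivial E]
    (hβ : -finrank ℝ E < β) (hβ' : β ≤ 0) :
    ∃ C > 0, ∀ s > 0, ∀ z x : E,
      ∫⁻ y, ENNReal.ofReal (heatKernel s (y - x)) * ENNReal.ofReal (‖z - y‖ ^ β) ≤
        ENNReal.ofReal (C * s ^ (β / 2)) := by
  set K := ∫ w in ball (0 : E) 1, ‖w‖ ^ β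
  have hK : 0 ≤ K := integral_nonneg fun w ↦ by positivity
  set N : ℝ := finrank ℝ E / 2 with hN
  refine ⟨(2 * π) ^ (-N) * K + 1, by positivity, fun s hs z x ↦ ?_⟩
  have balance : (2 * π * s) ^ (-N) * (√s ^ (finrank ℝ E + β) * K) + √s ^ β =
      ((2 * π) ^ (-N) * K + 1) * s ^ (β / 2) := by
    rw [← rpow_div_two_eq_sqrt _ hs.le, ← rpow_div_two_eq_sqrt _ hs.le, add_div, ← hN,
      mul_rpow (by positivity) hs.le, rpow_add hs, rpow_neg hs.le]
    field_simp
  calc _ ≤ ENNReal.ofReal ((2 * π * s) ^ (-N)) *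
          (∫⁻ w in ball (0 : E) √s, ENNReal.ofReal (‖w‖ ^ β)) +
          ENNReal.ofReal (√s ^ β) * ∫⁻ y, ENNReal.ofReal (heatKernel s (y - x)) :=
        lintegral_mul_norm_sub_rpow_le volume hβ' (sqrt_pos.2 hs)
          (fun y ↦ ENNReal.ofReal_le_ofReal (heatKernel_le hs.le (y - x))) z
    _ = ENNReal.ofReal (((2 * π) ^ (-N) * K + 1) * s ^ (β / 2)) := by
        rw [setLIntegral_ball_norm_rpow volume hβ (sqrt_pos.2 hs), lintegral_heatKernel_sub hs,
          mul_one, ← ENNReal.ofReal_mul (by positivity),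
          ← ENNReal.ofReal_add (by positivity) (by positivity), balance]

lemma exists_lintegral_lintegral_heatKernel_mul_norm_rpow_le [Nontrivial E]
    (hβ : -finrank ℝ E < β) (hβ' : β ≤ 0) :
    ∃ C > 0, ∀ s > 0, ∀ x x' : E,
      ∫⁻ z, ∫⁻ z', ENNReal.ofReal (heatKernel s (z - x) * heatKernel s (z' - x') * ‖z - z'‖ ^ β) ≤
        ENNReal.ofReal (C * s ^ (β / 2)) := by
  obtain ⟨C, hC, inner_le⟩ := exists_lintegral_heatKernel_mul_norm_rpow_le (E := E) hβ hβ'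
  refine ⟨C, hC, fun s hs x x' ↦ ?_⟩
  have factor (u v : E) (r : ℝ) : ENNReal.ofReal (heatKernel s u * heatKernel s v * r) =
      ENNReal.ofReal (heatKernel s u) * (ENNReal.ofReal (heatKernel s v) * ENNReal.ofReal r) := by
    rw [mul_assoc, ENNReal.ofReal_mul (heatKernel_nonneg hs.le u),
      ENNReal.ofReal_mul (heatKernel_nonneg hs.le v)]
  simp only [factor, lintegral_const_mul' _ _ ENNReal.ofReal_ne_top]
  calc _ ≤ ∫⁻ z, ENNReal.ofReal (heatKernel s (z - x)) * ENNReal.ofReal (C * s ^ (β / 2)) := by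
        gcongr with z; exact inner_le s hs z x'
    _ = ENNReal.ofReal (C * s ^ (β / 2)) := by
        rw [lintegral_mul_const' _ _ ENNReal.ofReal_ne_top, lintegral_heatKernel_sub hs, one_mul]

theorem double_gauss_riesz_bound_general {α : ℝ} (hα : 0 < α) (hα' : α ≤ finrank ℝ E / 2)
    (hDalang : (finrank ℝ E - 2 : ℝ) / 2 < α) :
    (∃ C > 0, ∀ s : ℝ, 0 < s → ∀ x x' : E,
      ∫⁻ z, ∫⁻ z', ENNReal.ofReal ((2 * π * s) ^ (-(finrank ℝ E : ℝ)) *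
          exp (-‖z - x‖ ^ 2 / (2 * s)) * exp (-‖z' - x'‖ ^ 2 / (2 * s)) *
          ‖z - z'‖ ^ (2 * α - finrank ℝ E)) ≤
        ENNReal.ofReal (C * s ^ ((2 * α - finrank ℝ E) / 2))) ∧
    ∀ t : ℝ, ∫⁻ s in Set.Ioc 0 t, ENNReal.ofReal (s ^ ((2 * α - finrank ℝ E) / 2)) ≠ ⊤ := by
  have dim_pos : (0 : ℝ) < finrank ℝ E := by linarith
  have : Nontrivial E := nontrivial_of_finrank_pos (R := ℝ) (mod_cast dim_pos)
  constructor
  · obtain ⟨C, hC, le⟩ := exists_lintegral_lintegral_heatKernel_mul_norm_rpow_le (E := E)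
      (β := 2 * α - finrank ℝ E) (by linarith) (by linarith)
    refine ⟨C, hC, fun s hs x x' ↦ ?_⟩
    simpa only [heatKernel_mul_heatKernel hs] using le s hs x x'
  · exact fun t ↦ (intervalIntegral.intervalIntegrable_rpow' (by linarith)).1.lintegral_lt_top.ne

end HeatKernel

/-- Under Dalang's condition `(d-2)/2 < α < d/2`, the double Gaussian–Riesz integral is
bounded by `C·s^{(2α-d)/2}` uniformly in the centers `x, x'`; moreover, since
`(2α-d)/2 > -1`, the bound `s^{(2α-d)/2}` is integrable over any bounded interval `(0,t)`. -/
theorem double_gauss_riesz_bound (d : ℕ) (hd : 1 ≤ d) (α : ℝ)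
    (hα0 : 0 < α) (hαd : α < d / 2) (hDalang : ((d : ℝ) - 2) / 2 < α) :
    (∃ C > (0 : ℝ), ∀ s : ℝ, 0 < s → ∀ x x' : EuclideanSpace ℝ (Fin d),
      (∫⁻ z : EuclideanSpace ℝ (Fin d), ∫⁻ z' : EuclideanSpace ℝ (Fin d),
          ENNReal.ofReal ((2 * Real.pi * s) ^ (-(d : ℝ))
            * Real.exp (-‖z - x‖ ^ 2 / (2 * s))
            * Real.exp (-‖z' - x'‖ ^ 2 / (2 * s)) * ‖z - z'‖ ^ (2 * α - (d : ℝ))))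
        ≤ ENNReal.ofReal (C * s ^ ((2 * α - (d : ℝ)) / 2))) ∧
    ∀ t : ℝ, 0 < t →
      (∫⁻ s in Set.Ioc (0 : ℝ) t, ENNReal.ofReal (s ^ ((2 * α - (d : ℝ)) / 2))) ≠ ⊤ := by
  have bound := double_gauss_riesz_bound_general (E := EuclideanSpace ℝ (Fin d)) (α := α)
  simp only [finrank_euclideanSpace_fin] at bound
  exact (bound hα0 hαd.le hDalang).imp_right fun time_integrable t _ ↦ time_integrable t
end
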